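/- Let E_n^sep denote expectation with respect to the uniform probability measure on SEP(n). Then E_n^sep[A_n^{+,−}] − (2−√2)n → −(1/4)(3−2√2) as n→∞, and the same limit holds for E_n^sep[A_n^{−,+}]. -/

import Mathlib

open Finset Filter Real
open scoped Classical

/-- `σ` contains the pattern `τ` (a permutation of `Fin k` given as a function). -/
def ContainsPattern {n k : ℕ} (σ : Equiv.Perm (Fin n)) (τ : Fin k → Fin k) : Prop :=
  ∃ f : Fin k → Fin n, StrictMono f ∧ ∀ a b : Fin k, τ a < τ b ↔ σ (f a) < σ (f b)

/-- A permutation is separable iff it avoids the patterns 2413 and 3142. -/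
def Separable {n : ℕ} (σ : Equiv.Perm (Fin n)) : Prop :=
  ¬ ContainsPattern σ (![1, 3, 0, 2] : Fin 4 → Fin 4) ∧
  ¬ ContainsPattern σ (![2, 0, 3, 1] : Fin 4 → Fin 4)

/-- The set of separable permutations of `[n]`. -/
noncomputable def SEP (n : ℕ) : Finset (Equiv.Perm (Fin n)) :=
  Finset.univ.filter fun σ => Separable σ

/-- `IsAltSeq σ s l` : `l` is a strictly increasing list of indices along which the values of `σ`
alternate, starting with an ascent if `s = true` and starting with a descent if `s = false`. -/
def IsAltSeq {n : ℕ} (σ : Equiv.Perm (Fin n)) (s : Bool) (l : List (Fin n)) : Prop :=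
  l.Chain' (· < ·) ∧
  ∀ j : ℕ, ∀ hj : j + 1 < l.length,
    if decide (j % 2 = 0) = s then
      σ (l.get ⟨j, Nat.lt_of_succ_lt hj⟩) < σ (l.get ⟨j + 1, hj⟩)
    else
      σ (l.get ⟨j + 1, hj⟩) < σ (l.get ⟨j, Nat.lt_of_succ_lt hj⟩)

/-- The length of the longest alternating subsequence of `σ` of type `(s, e)`, where
`true` stands for ascent and `false` for descent.  An alternating subsequence starting with
an ascent ends with a descent iff its length is odd (and similarly in the other cases), so the
type is encoded by the parity constraint; a singleton counts as a subsequence of types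
`(+,-)` and `(-,+)` but not of types `(+,+)` and `(-,-)`. -/
noncomputable def altTypeLen {n : ℕ} (σ : Equiv.Perm (Fin n)) (s e : Bool) : ℕ :=
  sSup {k | ∃ l : List (Fin n), IsAltSeq σ s l ∧ l.length = k ∧
    k % 2 = (if s = e then 0 else 1)}

/-- The length `Aₙ(σ)` of the longest alternating subsequence of `σ`. -/
noncomputable def altLen {n : ℕ} (σ : Equiv.Perm (Fin n)) : ℕ :=
  sSup {k | ∃ l : List (Fin n), (IsAltSeq σ true l ∨ IsAltSeq σ false l) ∧
    l.length = k ∧ 1 ≤ k}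

/-- Expectation with respect to the uniform probability measure on `SEP n`. -/
noncomputable def sepExp (n : ℕ) (f : Equiv.Perm (Fin n) → ℝ) : ℝ :=
  (∑ σ ∈ SEP n, f σ) / (SEP n).card

/-- Variance with respect to the uniform probability measure on `SEP n`. -/
noncomputable def sepVar (n : ℕ) (f : Equiv.Perm (Fin n) → ℝ) : ℝ :=
  sepExp n (fun σ => (f σ - sepExp n f) ^ 2)

/-- `B₁^{+,n}(σ)`: the length of the first indecomposable block (0-indexed positions). -/
noncomputable def Bplus {n : ℕ} (σ : Equiv.Perm (Fin n)) : ℕ :=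
  sInf {j | 1 ≤ j ∧ ∀ i : Fin n, (i : ℕ) < j → (σ i : ℕ) < j}

/-- `B₁^{-,n}(σ)`: the length of the first skew indecomposable block (0-indexed positions). -/
noncomputable def Bminus {n : ℕ} (σ : Equiv.Perm (Fin n)) : ℕ :=
  sInf {j | 1 ≤ j ∧ ∀ i : Fin n, (i : ℕ) < j → n - j ≤ (σ i : ℕ)}

/-- Expectation over indecomposable separable permutations of `[n]`, i.e. the conditional
expectation under the uniform measure on `SEP n` given `{B₁^{+,n} = n}`. -/
noncomputable def indecExp (n : ℕ) (f : Equiv.Perm (Fin n) → ℝ) : ℝ :=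
  (∑ σ ∈ (SEP n).filter (fun σ => Bplus σ = n), f σ) /
    ((SEP n).filter (fun σ => Bplus σ = n)).card

/-!
Deleting entries of a sequence never increases its number of peaks, and an alternating sequence of
type `(+,-)` and length `1 + 2 p` has `p` peaks. So the longest alternating subsequence of type
`(+,-)` has length `1 + 2 p`, where `p` is the number of peaks of `σ`; for type `(-,+)` the same
holds with valleys.

A separable permutation of size at least two is a direct sum or a skew sum, but not both, and
reversal exchanges the two kinds. Cutting a direct sum after its first indecomposable block gives
the Schröder equation `S² = S - X - X S` for the generating function `S` of the separable
permutations. Only the steps next to the cut matter for the peaks that the cut creates or destroys,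
so the same decomposition gives `2 P (1 - X - 2 S) = S² - X²` for the generating function `P` of the
total number of peaks, and likewise for valleys.

Since `(1 - X - 2 S)² = 1 - 6 X + X²`, the coefficients of `S` and `P` are combinations of those of
`(1 - 6 X + X²)^(-1/2)`, the central Delannoy numbers `d n`, and the mean for size `n + 2` is
`2 (n + 2) (d (n + 1) - d n) / (3 d (n + 1) - d n)`. The three-term recurrence of `d` shows that
`n (d (n + 1) / d n - α)` tends to `-α / 2` with `α = 3 + 2√2`, which yields the constant term.
-/

/-! ### Zigzags and peaks -/

section Zigzag

open Function

variable {α β : Type*} {r : α → α → Prop}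

/-- `Zigzag r l`: consecutive entries of `l` are related alternately by `r` and its converse,
starting with `r`. For `r = (· < ·)` these are the sequences `a < b > c < ⋯`. -/
def Zigzag : (α → α → Prop) → List α → Prop
  | r, a :: b :: l => r a b ∧ Zigzag (swap r) (b :: l)
  | _, _ => True

/-- The number of interior entries of a list lying strictly `r`-above both neighbours: the peaks
of the list for `r = (· < ·)`, its valleys for `r = (· > ·)`. -/
noncomputable def peaks (r : α → α → Prop) : List α → ℕ
  | a :: b :: c :: l => (if r a b ∧ r c b then 1 else 0) + peaks r (b :: c :: l)
  | _ => 0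

theorem zigzag_iff_getElem {l : List α} :
    Zigzag r l ↔ ∀ j, ∀ hj : j + 1 < l.length,
      if j % 2 = 0 then r l[j] l[j + 1] else r l[j + 1] l[j] := by
  induction l generalizing r with
  | nil => simp [Zigzag]
  | cons a l ih =>
    cases l with
    | nil => simp [Zigzag]
    | cons b l =>
      have parity (j : ℕ) : (j + 1) % 2 = 0 ↔ ¬ j % 2 = 0 := by omega
      rw [Zigzag, ih]
      constructor
      · rintro ⟨hab, h⟩ (_ | j) hj
        · simpa using hab
        · simp only [parity, ite_not]
          exact h j (Nat.lt_of_succ_lt_succ hj)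
      · intro h
        refine ⟨by simpa using h 0 (by simp), fun j hj => ?_⟩
        have hj' := h (j + 1) (Nat.succ_lt_succ hj)
        simp only [parity, ite_not] at hj'
        exact hj'

theorem peaks_map (f : β → α) : ∀ l : List β, peaks r (l.map f) = peaks (r on f) l
  | [] | [_] | [_, _] => rfl
  | _ :: b :: c :: l => congrArg (_ + ·) (peaks_map f (b :: c :: l))

theorem peaks_cons_of_not_rel {a b : α} (h : ¬ r a b) :
    ∀ l : List α, peaks r (a :: b :: l) = peaks r (b :: l)
  | [] => rfl
  | c :: l => by rw [peaks, if_neg fun h' => h h'.1, zero_add]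

theorem peaks_le_peaks_cons (a : α) : ∀ l : List α, peaks r l ≤ peaks r (a :: l)
  | [] | [_] => Nat.zero_le _
  | _ :: _ :: _ => Nat.le_add_left _ _

theorem peaks_append_cons_cons (a b : α) (v : List α) :
    ∀ u : List α, peaks r (u ++ a :: b :: v) = peaks r (u ++ [a, b]) + peaks r (a :: b :: v)
  | [] => (Nat.zero_add _).symm
  | [c] => by simp [peaks]
  | c :: d :: u => by
    have ih := peaks_append_cons_cons a b v (d :: u)
    cases u <;> simp_all only [List.cons_append, List.nil_append, peaks] <;> ring

theorem peaks_reverse : ∀ l : List α, peaks r l.reverse = peaks r l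
  | [] | [_] | [_, _] => rfl
  | a :: b :: c :: l => by
    have ih := peaks_reverse (b :: c :: l)
    rw [List.reverse_cons, List.reverse_cons, List.append_assoc] at ih
    have split := peaks_append_cons_cons (r := r) c b [a] l.reverse
    simp_all [peaks, add_comm, and_comm]

theorem Zigzag.peaks_eq [Std.Asymm r] :
    ∀ {l : List α}, Zigzag r l → peaks r l = (l.length - 1) / 2
  | [], _ | [_], _ | [_, _], _ => by simp [peaks]
  | a :: b :: c :: l, ⟨hab, hcb, hl⟩ => by
    have hbc : ¬ r b c := asymm hcb
    rw [peaks, if_pos ⟨hab, hcb⟩, peaks_cons_of_not_rel hbc, Zigzag.peaks_eq hl]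
    simp only [List.length_cons]
    omega

section StrictTotalOrder

variable [IsStrictTotalOrder α r]

theorem peaks_cons_le_peaks_cons_cons {a b : α} :
    ∀ {l : List α}, (b :: l).Nodup → peaks r (a :: l) ≤ peaks r (a :: b :: l)
  | [], _ => Nat.zero_le _
  | [c], _ => Nat.zero_le _
  | c :: d :: l, h => by
    have hbc : b ≠ c := by rintro rfl; simp at h
    rcases trichotomous_of r b c with hbc' | rfl | hcb
    · have : r a c → r d c → r b c := fun _ _ => hbc'
      simp only [peaks]
      grind
    · exact absurd rfl hbc
    · have : r a c → r a b := fun hac => _root_.trans hac hcb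
      simp only [peaks]
      grind

theorem peaks_append_le_peaks_append_cons {b : α} {v : List α} :
    ∀ {u : List α}, (u ++ b :: v).Nodup → peaks r (u ++ v) ≤ peaks r (u ++ b :: v)
  | [], _ => peaks_le_peaks_cons b v
  | [a], h => peaks_cons_le_peaks_cons_cons (List.nodup_cons.1 h).2
  | [a, a'], h => by
    obtain _ | ⟨c, v⟩ := v
    · exact Nat.zero_le _
    have hnd := (List.nodup_cons.1 h).2
    have hdel : peaks r (a' :: c :: v) ≤ peaks r (a' :: b :: c :: v) :=
      peaks_cons_le_peaks_cons_cons (List.nodup_cons.1 hnd).2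
    have hskip : peaks r (c :: v) ≤ peaks r (b :: c :: v) := peaks_le_peaks_cons b (c :: v)
    by_cases hpeak : r a a' ∧ r c a'
    · have hca : peaks r (a' :: c :: v) = peaks r (c :: v) :=
        peaks_cons_of_not_rel (asymm hpeak.2) v
      -- The deleted peak was at `a'`: with `b` inserted, the higher of `a'` and `b` is a peak.
      rcases trichotomous_of r b a' with hba | rfl | hab
      · simp only [List.cons_append, List.nil_append, peaks, if_pos hpeak,
          if_pos (And.intro hpeak.1 hba)] at *
        grind
      · simp at hnd
      · have hcb : r c b := _root_.trans hpeak.2 hab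
        simp only [List.cons_append, List.nil_append, peaks, if_pos hpeak,
          if_pos (And.intro hab hcb)] at *
        grind
    · simp only [List.cons_append, List.nil_append, peaks, if_neg hpeak] at *
      grind
  | _ :: a' :: a'' :: u, h =>
    Nat.add_le_add_left (peaks_append_le_peaks_append_cons (u := a' :: a'' :: u)
      (List.nodup_cons.1 h).2) _

theorem peaks_le_of_sublist {l l' : List α} (h : l'.Sublist l) (hl : l.Nodup) :
    peaks r l' ≤ peaks r l := by
  suffices ∀ u, (u ++ l).Nodup → peaks r (u ++ l') ≤ peaks r (u ++ l) from this [] hl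
  clear hl
  induction h with
  | slnil => exact fun _ _ => le_rfl
  | cons b _ ih =>
    exact fun u hu => (ih u (hu.sublist (by simp))).trans (peaks_append_le_peaks_append_cons hu)
  | cons_cons b _ ih => exact fun u hu => by simpa using ih (u ++ [b]) (by simpa using hu)

theorem exists_zigzag_sublist_cons (r : α → α → Prop) [IsStrictTotalOrder α r] :
    ∀ (a : α) (l : List α), ∃ x l', (x :: l').Sublist (a :: l) ∧ Zigzag r (x :: l') ∧
      (x :: l').length = 1 + 2 * peaks r (a :: l) ∧ ¬ r a x
  | a, [] => ⟨a, [], .refl _, trivial, rfl, irrefl a⟩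
  | a, [b] => ⟨a, [], by simp, trivial, rfl, irrefl a⟩
  | a, b :: c :: l => by
    by_cases hpeak : r a b ∧ r c b
    · obtain ⟨x, l', hsub, hzig, hlen, hx⟩ := exists_zigzag_sublist_cons r c l
      have hxb : r x b := by
        rcases trichotomous_of r c x with h | rfl | h
        exacts [absurd h hx, hpeak.2, _root_.trans h hpeak.2]
      have hbc : peaks r (b :: c :: l) = peaks r (c :: l) := peaks_cons_of_not_rel (asymm hpeak.2) l
      refine ⟨a, b :: x :: l', (hsub.cons_cons b).cons_cons a, ⟨hpeak.1, hxb, hzig⟩, ?_, irrefl a⟩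
      simp only [List.length_cons, peaks, if_pos hpeak] at hlen ⊢
      omega
    · obtain ⟨x, l', hsub, hzig, hlen, -⟩ := exists_zigzag_sublist_cons r b (c :: l)
      rw [peaks, if_neg hpeak, zero_add]
      by_cases hax : r a x
      · obtain _ | ⟨y, l'⟩ := l'
        · exact ⟨a, [], by simp, trivial, hlen, irrefl a⟩
        · exact ⟨a, y :: l', ((List.sublist_cons_self x _).trans hsub).cons_cons a,
            ⟨_root_.trans hax hzig.1, hzig.2⟩, hlen, irrefl a⟩
      · exact ⟨x, l', hsub.cons a, hzig, hlen, hax⟩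

theorem isGreatest_length_zigzag_sublist {l : List α} (hl : l ≠ []) (hnd : l.Nodup) :
    IsGreatest {k | ∃ l' : List α, l'.Sublist l ∧ Zigzag r l' ∧ l'.length = k ∧ Odd k}
      (1 + 2 * peaks r l) := by
  constructor
  · obtain ⟨a, l, rfl⟩ := List.exists_cons_of_ne_nil hl
    obtain ⟨x, l', hsub, hzig, hlen, -⟩ := exists_zigzag_sublist_cons r a l
    exact ⟨x :: l', hsub, hzig, hlen, by simp⟩
  · rintro _ ⟨l', hsub, hzig, rfl, m, hm⟩
    have hle := peaks_le_of_sublist (r := r) hsub hnd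
    rw [hzig.peaks_eq] at hle
    omega

end StrictTotalOrder

end Zigzag

section AlternatingSubsequences

open Function

/-- The relation `<` for the sign `true` and `>` for the sign `false`: the first step of an
alternating sequence of the given initial sign. -/
def signedLT {α : Type*} [LT α] (s : Bool) : α → α → Prop := if s then (· < ·) else (· > ·)

instance {α : Type*} [LinearOrder α] (s : Bool) : IsStrictTotalOrder α (signedLT s) := by
  cases s
  · exact inferInstanceAs (IsStrictTotalOrder α (· > ·))
  · exact inferInstanceAs (IsStrictTotalOrder α (· < ·))

variable {n : ℕ} (σ : Equiv.Perm (Fin n))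

theorem sublist_finRange_iff {l : List (Fin n)} :
    l.Sublist (List.finRange n) ↔ l.IsChain (· < ·) := by
  rw [List.isChain_iff_pairwise]
  exact ⟨fun h => (List.pairwise_lt_finRange n).sublist h, fun h =>
    List.sublist_of_subperm_of_pairwise (List.subperm_of_subset h.nodup fun x _ =>
      List.mem_finRange x) h (List.pairwise_lt_finRange n)⟩

theorem isAltSeq_iff {s : Bool} {l : List (Fin n)} :
    IsAltSeq σ s l ↔ l.Sublist (List.finRange n) ∧ Zigzag (signedLT s on σ) l := by
  rw [IsAltSeq, sublist_finRange_iff, zigzag_iff_getElem]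
  refine and_congr_right' (forall₂_congr fun j hj => ?_)
  cases s <;> by_cases hj : j % 2 = 0 <;> simp [hj, signedLT, onFun]

theorem altTypeLen_not_eq (hn : n ≠ 0) (s : Bool) :
    altTypeLen σ s (!s) = 1 + 2 * peaks (signedLT s) ((List.finRange n).map σ) := by
  have : IsStrictTotalOrder (Fin n) (signedLT s on σ) :=
    (RelEmbedding.preimage σ.toEmbedding (signedLT s)).isStrictTotalOrder
  have hodd (k : ℕ) : k % 2 = (if s = !s then 0 else 1) ↔ Odd k := by simp [Nat.odd_iff]
  rw [peaks_map, altTypeLen]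
  simp only [isAltSeq_iff, hodd, and_assoc]
  exact (isGreatest_length_zigzag_sublist (by simpa using hn) (List.nodup_finRange n)).csSup_eq

end AlternatingSubsequences

/-! ### Separable sequences -/

section SeparableLists

open Function

variable {α β : Type*} {r : α → α → Prop}

/-- No four entries of `l`, in order, form the pattern `3142` when compared by `r`. For the converse
of `<` in place of `r = (· < ·)` this means avoiding `2413`. -/
def Avoids3142 (r : α → α → Prop) (l : List α) : Prop :=
  ∀ a b c d, [a, b, c, d].Sublist l → ¬ (r b d ∧ r d a ∧ r a c)

/-- Separability of a sequence whose entries are compared by `r`. -/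
def SeparableList (r : α → α → Prop) (l : List α) : Prop :=
  Avoids3142 r l ∧ Avoids3142 (swap r) l

/-- `l` is the concatenation of two nonempty lists, every entry of the first being `r`-below every
entry of the second: a direct sum for `r = (· < ·)`, a skew sum for `r = (· > ·)`. -/
def SplitsBy (r : α → α → Prop) (l : List α) : Prop :=
  ∃ u v, u ≠ [] ∧ v ≠ [] ∧ l = u ++ v ∧ ∀ x ∈ u, ∀ y ∈ v, r x y

theorem Avoids3142.sublist {l l' : List α} (h : Avoids3142 r l) (hs : l'.Sublist l) :
    Avoids3142 r l' :=
  fun a b c d h' => h a b c d (h'.trans hs)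

theorem avoids3142_map {f : β → α} {l : List β} :
    Avoids3142 r (l.map f) ↔ Avoids3142 (r on f) l := by
  refine ⟨fun h a b c d hs => h _ _ _ _ (hs.map f), fun h a b c d hs => ?_⟩
  obtain ⟨m, hm, he⟩ := List.sublist_map_iff.1 hs
  obtain ⟨a', _, rfl, rfl, ha⟩ := List.map_eq_cons_iff.1 he.symm
  obtain ⟨b', _, rfl, rfl, hb⟩ := List.map_eq_cons_iff.1 ha
  obtain ⟨c', _, rfl, rfl, hc⟩ := List.map_eq_cons_iff.1 hb
  obtain ⟨d', _, rfl, rfl, hd⟩ := List.map_eq_cons_iff.1 hc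
  obtain rfl := List.map_eq_nil_iff.1 hd
  exact h a' b' c' d' hm

theorem avoids3142_reverse {l : List α} : Avoids3142 r l.reverse ↔ Avoids3142 (swap r) l := by
  refine ⟨fun h a b c d hs ⟨hbd, hda, hac⟩ => h d c b a hs.reverse ⟨hac, hda, hbd⟩,
    fun h a b c d hs ⟨hbd, hda, hac⟩ => h d c b a ?_ ⟨hac, hda, hbd⟩⟩
  simpa using hs.reverse

theorem SeparableList.sublist {l l' : List α} (h : SeparableList r l) (hs : l'.Sublist l) :
    SeparableList r l' :=
  ⟨h.1.sublist hs, h.2.sublist hs⟩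

theorem separableList_map {f : β → α} {l : List β} :
    SeparableList r (l.map f) ↔ SeparableList (r on f) l :=
  and_congr avoids3142_map avoids3142_map

theorem separableList_reverse {l : List α} : SeparableList r l.reverse ↔ SeparableList r l := by
  rw [SeparableList, avoids3142_reverse, avoids3142_reverse, and_comm]
  rfl

theorem four_sublist_append {a b c d : α} {u v : List α} (h : [a, b, c, d].Sublist (u ++ v)) :
    [a, b, c, d].Sublist u ∨ [a, b, c, d].Sublist v ∨ a ∈ u ∧ d ∈ v ∧ (b ∈ u ∨ c ∈ v) := by
  obtain ⟨l₁, l₂, he, h₁, h₂⟩ := List.sublist_append_iff.1 h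
  have hsub₁ := h₁.subset
  have hsub₂ := h₂.subset
  match l₁ with
  | [] | [_] | [_, _] | [_, _, _] | [_, _, _, _] | _ :: _ :: _ :: _ :: _ :: _ => grind

theorem SeparableList.append [Std.Asymm r] {u v : List α} (hu : SeparableList r u)
    (hv : SeparableList r v) (huv : ∀ x ∈ u, ∀ y ∈ v, r x y) : SeparableList r (u ++ v) := by
  constructor <;> rintro a b c d hs ⟨hbd, hda, hac⟩ <;>
    rcases four_sublist_append hs with h | h | ⟨ha, hd, h⟩
  · exact hu.1 a b c d h ⟨hbd, hda, hac⟩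
  · exact hv.1 a b c d h ⟨hbd, hda, hac⟩
  · exact asymm hda (huv a ha d hd)
  · exact hu.2 a b c d h ⟨hbd, hda, hac⟩
  · exact hv.2 a b c d h ⟨hbd, hda, hac⟩
  · rcases h with hb | hc
    exacts [asymm hbd (huv b hb d hd), asymm hac (huv a ha c hc)]

theorem splitsBy_reverse {l : List α} : SplitsBy r l.reverse ↔ SplitsBy (swap r) l := by
  constructor <;> rintro ⟨u, v, hu, hv, he, huv⟩ <;>
    refine ⟨v.reverse, u.reverse, by simpa, by simpa, ?_, ?_⟩
  · simpa using congrArg List.reverse he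
  · simpa using fun x hx y hy => huv y hy x hx
  · simp [he]
  · simpa using fun x hx y hy => huv y hy x hx

theorem not_splitsBy_singleton (a : α) : ¬ SplitsBy r [a] := by
  rintro ⟨_ | ⟨_, u⟩, v, hu, hv, he, -⟩ <;> simp_all

theorem SplitsBy.exists_head_rel_getLast {l : List α} (h : SplitsBy r l) :
    ∃ hl : l ≠ [], r (l.head hl) (l.getLast hl) := by
  obtain ⟨u, v, hu, hv, rfl, huv⟩ := h
  refine ⟨by simp [hu], ?_⟩
  rw [List.head_append_of_ne_nil hu, List.getLast_append_of_ne_nil _ hv]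
  exact huv _ (List.head_mem hu) _ (List.getLast_mem hv)

theorem SplitsBy.not_swap [Std.Asymm r] {l : List α} (h : SplitsBy r l) :
    ¬ SplitsBy (swap r) l := by
  obtain ⟨_, hrel⟩ := h.exists_head_rel_getLast
  exact fun h' => asymm hrel h'.exists_head_rel_getLast.2

section StrictTotalOrder

variable [IsStrictTotalOrder α r]

theorem rel_or_rel_of_ne {a b : α} (h : a ≠ b) : r a b ∨ r b a :=
  (trichotomous_of r a b).imp_right fun h' => h'.resolve_left h

theorem Avoids3142.rel_of_mem_dropWhile {u : List α} {x y b : α}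
    (h : Avoids3142 r (u ++ [y, x])) (huy : ∀ a ∈ u, r a y) (hxu : x ∉ u)
    (hb : b ∈ u.dropWhile (r · x)) : r x b := by
  have hsub : (u.dropWhile (r · x)).Sublist u := List.dropWhile_sublist _
  have rel_or_rel {a : α} (ha : a ∈ u) : r a x ∨ r x a :=
    rel_or_rel_of_ne fun hax => hxu (hax ▸ ha)
  refine (rel_or_rel (hsub.subset hb)).resolve_left fun hbx => ?_
  cases hp : u.dropWhile (r · x) with
  | nil => simp [hp] at hb
  | cons p w =>
    rw [hp] at hsub hb
    have hpu : p ∈ u := hsub.subset (by simp)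
    have hpx : ¬ r p x := by
      simpa [hp] using List.head_dropWhile_not (r · x) (l := u) (by simp [hp])
    have hbw : b ∈ w := (List.mem_cons.1 hb).resolve_left fun hbp => hpx (hbp ▸ hbx)
    have hpb : [p, b].Sublist u := ((List.singleton_sublist.2 hbw).cons_cons p).trans hsub
    exact h p b y x (hpb.append (.refl _)) ⟨hbx, (rel_or_rel hpu).resolve_left hpx, huy p hpu⟩

theorem SplitsBy.append_singleton {l : List α} {x : α} (hl : SplitsBy r l) (hx : x ∉ l)
    (hav : Avoids3142 r (l ++ [x])) : SplitsBy r (l ++ [x]) ∨ SplitsBy (swap r) (l ++ [x]) := by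
  obtain ⟨u, v, hu, hv, rfl, huv⟩ := hl
  obtain ⟨y, hy⟩ := List.exists_mem_of_ne_nil v hv
  have hlow : ∀ a ∈ u.takeWhile (r · x), r a x := fun a ha => by
    simpa using List.mem_takeWhile_imp ha
  have hhigh : ∀ b ∈ u.dropWhile (r · x), r x b := fun b hb => by
    refine Avoids3142.rel_of_mem_dropWhile (y := y) (hav.sublist ?_) (fun a ha => huv a ha y hy)
      (fun h => hx (List.mem_append_left v h)) hb
    rw [List.append_assoc]
    exact (List.Sublist.refl u).append ((List.singleton_sublist.2 hy).append (.refl [x]))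
  have hsplit : u = u.takeWhile (r · x) ++ u.dropWhile (r · x) :=
    List.takeWhile_append_dropWhile.symm
  generalize u.takeWhile (r · x) = lo at hlow hsplit
  generalize u.dropWhile (r · x) = hi at hhigh hsplit
  subst hsplit
  by_cases hlo : lo = []
  · obtain ⟨b, hb⟩ := List.exists_mem_of_ne_nil hi (by simpa [hlo] using hu)
    have hbv : ∀ z ∈ v, r x z := fun z hz => _root_.trans (hhigh b hb) (huv b (by simp [hb]) z hz)
    refine Or.inr ⟨hi ++ v, [x], by simp [hv], by simp, by simp [hlo], ?_⟩
    simpa [or_imp, forall_and] using ⟨hhigh, hbv⟩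
  · refine Or.inl ⟨lo, hi ++ v ++ [x], hlo, by simp, by simp, ?_⟩
    intro a ha z hz
    simp only [List.mem_append, List.mem_singleton] at hz
    rcases hz with (hz | hz) | rfl
    exacts [_root_.trans (hlow a ha) (hhigh z hz), huv a (by simp [ha]) z hz, hlow a ha]

theorem SeparableList.splitsBy_or_splitsBy_swap {l : List α} (h : SeparableList r l)
    (hnd : l.Nodup) (hlen : 2 ≤ l.length) : SplitsBy r l ∨ SplitsBy (swap r) l := by
  induction l using List.reverseRecOn with
  | nil => simp at hlen
  | append_singleton l x ih =>
    have hx : x ∉ l := fun hxl => List.disjoint_of_nodup_append hnd hxl (by simp)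
    have hsub : l.Sublist (l ++ [x]) := List.sublist_append_left _ _
    by_cases hl : 2 ≤ l.length
    · rcases ih (h.sublist hsub) (hnd.sublist hsub) hl with hs | hs
      exacts [hs.append_singleton hx h.1, (hs.append_singleton hx h.2).symm]
    · obtain ⟨a, rfl⟩ : ∃ a, l = [a] := List.length_eq_one_iff.1 (by simp at hlen; omega)
      have hax : a ≠ x := by simpa [eq_comm] using hx
      exact (rel_or_rel_of_ne (r := r) hax).imp (fun h' => ⟨[a], [x], by simpa using h'⟩)
        fun h' => ⟨[a], [x], by simpa using h'⟩

end StrictTotalOrder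

theorem SplitsBy.exists_not_splitsBy_append {l : List α} (h : SplitsBy r l) :
    ∃ u v, u ≠ [] ∧ v ≠ [] ∧ l = u ++ v ∧ (∀ x ∈ u, ∀ y ∈ v, r x y) ∧ ¬ SplitsBy r u := by
  obtain ⟨u, v, hu, hv, rfl, huv⟩ := h
  by_cases hsu : SplitsBy r u
  · have : u.length < (u ++ v).length := by simpa [List.length_pos_iff] using hv
    obtain ⟨u', v', hu', _, rfl, huv', hns⟩ := hsu.exists_not_splitsBy_append
    refine ⟨u', v' ++ v, hu', by simp [hv], List.append_assoc .., fun x hx y hy => ?_, hns⟩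
    rcases List.mem_append.1 hy with hy | hy
    exacts [huv' x hx y hy, huv x (List.mem_append_left _ hx) y hy]
  · exact ⟨u, v, hu, hv, rfl, huv, hsu⟩
termination_by l.length

theorem length_le_of_append_eq_append {u v u' v' : List α} (h : u ++ v = u' ++ v') (hu : u ≠ [])
    (huv : ∀ x ∈ u, ∀ y ∈ v, r x y) (hu' : ¬ SplitsBy r u') : u'.length ≤ u.length := by
  by_contra! hlt
  obtain ⟨w, rfl⟩ := List.prefix_of_prefix_length_le (List.prefix_append u v)
    (h ▸ List.prefix_append u' v') hlt.le
  rw [List.append_assoc, List.append_cancel_left_eq] at h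
  refine hu' ⟨u, w, hu, ?_, rfl, fun x hx y hy => huv x hx y (by simp [h, hy])⟩
  rintro rfl
  simp at hlt

end SeparableLists

/-! ### Words and direct sums -/

section Words

open Function

/-- The words (one-line notation, with values `0, …, n - 1`) of the separable permutations of size
`n`. The empty word is left out. -/
noncomputable def sepWords (n : ℕ) : Finset (List ℕ) :=
  (List.range n).permutations.toFinset.filter fun l => l ≠ [] ∧ SeparableList (· < ·) l

/-- The separable words that are direct sums. -/
noncomputable def sumWords (n : ℕ) : Finset (List ℕ) := (sepWords n).filter (SplitsBy (· < ·))

/-- The separable words that are skew sums. -/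
noncomputable def skewWords (n : ℕ) : Finset (List ℕ) := (sepWords n).filter (SplitsBy (· > ·))

/-- The separable words that are not direct sums. -/
noncomputable def indecWords (n : ℕ) : Finset (List ℕ) :=
  (sepWords n).filter fun l => ¬ SplitsBy (· < ·) l

/-- The direct sum of two words: the second word, shifted by the length of the first, is put
above and to the right of the first. -/
def directSum (u v : List ℕ) : List ℕ := u ++ v.map (u.length + ·)

variable {n k : ℕ} {l u v w : List ℕ}

theorem mem_sepWords :
    l ∈ sepWords n ↔ l.Perm (List.range n) ∧ l ≠ [] ∧ SeparableList (· < ·) l := by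
  simp [sepWords]

theorem mem_sumWords : l ∈ sumWords n ↔ l ∈ sepWords n ∧ SplitsBy (· < ·) l := Finset.mem_filter

theorem mem_skewWords : l ∈ skewWords n ↔ l ∈ sepWords n ∧ SplitsBy (· > ·) l := Finset.mem_filter

theorem mem_indecWords : l ∈ indecWords n ↔ l ∈ sepWords n ∧ ¬ SplitsBy (· < ·) l :=
  Finset.mem_filter

theorem length_of_mem_sepWords (hl : l ∈ sepWords n) : l.length = n := by
  simpa using (mem_sepWords.1 hl).1.length_eq

theorem ne_nil_of_mem_sepWords (hl : l ∈ sepWords n) : l ≠ [] := (mem_sepWords.1 hl).2.1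

theorem nodup_of_mem_sepWords (hl : l ∈ sepWords n) : l.Nodup :=
  (mem_sepWords.1 hl).1.nodup_iff.2 List.nodup_range

theorem reverse_mem_sepWords : l.reverse ∈ sepWords n ↔ l ∈ sepWords n := by
  rw [mem_sepWords, mem_sepWords, separableList_reverse, ne_eq, List.reverse_eq_nil_iff,
    l.reverse_perm.congr_left]

theorem reverse_mem_sumWords : l.reverse ∈ sumWords n ↔ l ∈ skewWords n := by
  rw [mem_sumWords, mem_skewWords, reverse_mem_sepWords, splitsBy_reverse]

theorem sepWords_zero : sepWords 0 = ∅ :=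
  Finset.eq_empty_of_forall_notMem fun _ hl =>
    ne_nil_of_mem_sepWords hl (List.length_eq_zero_iff.1 (length_of_mem_sepWords hl))

theorem sepWords_one : sepWords 1 = {[0]} := by
  ext l
  simp only [mem_sepWords, List.range_one, List.perm_singleton, Finset.mem_singleton]
  refine ⟨fun h => h.1, fun h => ⟨h, by simp [h], ?_⟩⟩
  subst h
  constructor <;> exact fun a b c d hs => absurd hs.length_le (by simp)

theorem indecWords_one : indecWords 1 = {[0]} := by
  simp [indecWords, sepWords_one, Finset.filter_singleton, not_splitsBy_singleton]

theorem skewWords_one : skewWords 1 = ∅ := by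
  simp [skewWords, sepWords_one, Finset.filter_singleton, not_splitsBy_singleton]

theorem indecWords_eq_skewWords (hn : n ≠ 1) : indecWords n = skewWords n := by
  ext l
  rw [mem_indecWords, mem_skewWords, and_congr_right_iff]
  refine fun hl => ⟨fun h => ?_, SplitsBy.not_swap⟩
  obtain ⟨-, hne, hsep⟩ := mem_sepWords.1 hl
  have hlen := length_of_mem_sepWords hl
  have hpos := List.length_pos_iff.2 hne
  exact (hsep.splitsBy_or_splitsBy_swap (nodup_of_mem_sepWords hl) (by omega)).resolve_left h

theorem exists_append_eq_directSum (h : (u ++ v).Perm (List.range n))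
    (huv : ∀ x ∈ u, ∀ y ∈ v, x < y) :
    ∃ k w, u.length + k = n ∧ u.Perm (List.range u.length) ∧ w.Perm (List.range k) ∧
      u ++ v = directSum u w := by
  obtain ⟨k, rfl⟩ : ∃ k, n = u.length + k := ⟨v.length, by simpa using h.length_eq.symm⟩
  have hperm : (u.mergeSort ++ v.mergeSort).Perm
      (List.range u.length ++ (List.range k).map (u.length + ·)) := by
    rw [← List.range_add]
    exact ((List.mergeSort_perm u _).append (List.mergeSort_perm v _)).trans h
  have hsorted : (u.mergeSort ++ v.mergeSort).Pairwise (· ≤ ·) := by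
    refine List.pairwise_append.2 ⟨List.pairwise_mergeSort' _ u, List.pairwise_mergeSort' _ v, ?_⟩
    simpa using fun x hx y hy => (huv x hx y hy).le
  have heq : u.mergeSort ++ v.mergeSort =
      List.range u.length ++ (List.range k).map (u.length + ·) :=
    hperm.eq_of_pairwise' hsorted (List.range_add ▸ List.pairwise_le_range)
  obtain ⟨hu, hv⟩ := List.append_inj heq (by simp)
  have hvperm : v.Perm ((List.range k).map (u.length + ·)) :=
    hv ▸ (List.mergeSort_perm v _).symm
  obtain ⟨w, rfl, hw⟩ := (List.eq_map_comp_perm (u.length + ·)).symm.le v (List.range k) hvperm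
  exact ⟨k, w, rfl, hu ▸ (List.mergeSort_perm u _).symm, hw, rfl⟩

theorem lt_of_mem_of_mem_map_add (hu : u ∈ sepWords n) :
    ∀ x ∈ u, ∀ y ∈ v.map (u.length + ·), x < y := by
  intro x hx y hy
  obtain ⟨z, -, rfl⟩ := List.mem_map.1 hy
  have hxn := (mem_sepWords.1 hu).1.subset hx
  rw [List.mem_range, ← length_of_mem_sepWords hu] at hxn
  omega

theorem lt_on_add_left (j : ℕ) : ((· < ·) on (j + ·) : ℕ → ℕ → Prop) = (· < ·) := by
  ext; simp [onFun]

theorem directSum_mem_sumWords (hu : u ∈ sepWords n) (hv : v ∈ sepWords k) :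
    directSum u v ∈ sumWords (n + k) := by
  obtain ⟨hup, hune, hus⟩ := mem_sepWords.1 hu
  obtain ⟨hvp, hvne, hvs⟩ := mem_sepWords.1 hv
  have hlt := lt_of_mem_of_mem_map_add (v := v) hu
  have hvs' : SeparableList (· < ·) (v.map (u.length + ·)) := by
    rwa [separableList_map, lt_on_add_left]
  refine mem_sumWords.2 ⟨mem_sepWords.2 ⟨?_, by simp [directSum, hune], hus.append hvs' hlt⟩,
    u, _, hune, by simpa, rfl, hlt⟩
  rw [List.range_add, directSum, length_of_mem_sepWords hu]
  exact hup.append (hvp.map _)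

theorem exists_directSum_eq_of_mem_sumWords (hl : l ∈ sumWords n) :
    ∃ j k, j + k = n ∧ ∃ u ∈ indecWords j, ∃ v ∈ sepWords k, directSum u v = l := by
  obtain ⟨hl, hs⟩ := mem_sumWords.1 hl
  obtain ⟨hp, -, hsep⟩ := mem_sepWords.1 hl
  obtain ⟨u, v, hune, hvne, rfl, huv, hu⟩ := hs.exists_not_splitsBy_append
  obtain ⟨k, w, hk, hup, hwp, he⟩ := exists_append_eq_directSum hp huv
  obtain rfl : v = w.map (u.length + ·) := List.append_cancel_left he
  refine ⟨u.length, k, hk, u, mem_indecWords.2 ⟨mem_sepWords.2 ⟨hup, hune, ?_⟩, hu⟩, w,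
    mem_sepWords.2 ⟨hwp, by simpa using hvne, ?_⟩, rfl⟩
  · exact hsep.sublist (List.sublist_append_left _ _)
  · simpa only [separableList_map, lt_on_add_left] using
      hsep.sublist (List.sublist_append_right _ _)

theorem directSum_inj {j j' : ℕ} {u' v' : List ℕ} (hu : u ∈ indecWords j)
    (hu' : u' ∈ indecWords j') (h : directSum u v = directSum u' v') : u = u' ∧ v = v' := by
  rw [mem_indecWords] at hu hu'
  have hlen : u.length = u'.length := le_antisymm
    (length_le_of_append_eq_append h.symm (ne_nil_of_mem_sepWords hu'.1)
      (lt_of_mem_of_mem_map_add hu'.1) hu.2)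
    (length_le_of_append_eq_append h (ne_nil_of_mem_sepWords hu.1)
      (lt_of_mem_of_mem_map_add hu.1) hu'.2)
  obtain ⟨rfl, hv⟩ := List.append_inj h hlen
  exact ⟨rfl, List.map_injective_iff.2 (add_right_injective _) hv⟩

theorem sum_sumWords {M : Type*} [AddCommMonoid M] (n : ℕ) (F : List ℕ → M) :
    ∑ l ∈ sumWords n, F l =
      ∑ p ∈ HasAntidiagonal.antidiagonal n,
        ∑ u ∈ indecWords p.1, ∑ v ∈ sepWords p.2, F (directSum u v) := by
  simp_rw [← Finset.sum_product', Finset.sum_sigma']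
  symm
  refine Finset.sum_bij (fun x _ => directSum x.2.1 x.2.2) ?_ ?_ ?_ (fun _ _ => rfl)
  · rintro ⟨⟨j, k⟩, u, v⟩ hx
    simp only [mem_sigma, mem_product, HasAntidiagonal.mem_antidiagonal] at hx
    exact hx.1 ▸ directSum_mem_sumWords (mem_indecWords.1 hx.2.1).1 hx.2.2
  · rintro ⟨⟨j, k⟩, u, v⟩ hx ⟨⟨j', k'⟩, u', v'⟩ hx' h
    simp only [mem_sigma, mem_product] at hx hx'
    obtain ⟨rfl, rfl⟩ := directSum_inj hx.2.1 hx'.2.1 h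
    obtain rfl := (length_of_mem_sepWords (mem_indecWords.1 hx.2.1).1).symm.trans
      (length_of_mem_sepWords (mem_indecWords.1 hx'.2.1).1)
    obtain rfl := (length_of_mem_sepWords hx.2.2).symm.trans (length_of_mem_sepWords hx'.2.2)
    rfl
  · intro l hl
    obtain ⟨j, k, hjk, u, hu, v, hv, rfl⟩ := exists_directSum_eq_of_mem_sumWords hl
    exact ⟨⟨(j, k), u, v⟩, by simp [hjk, hu, hv], rfl⟩

end Words

section Statistics

open Function

variable {α β : Type*} {r : α → α → Prop} {u v : List α}

/-- The indicator of the lists whose first step goes from some `a` to some `b` with `r a b`. The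
last step of a list is recorded by the value at its reverse. -/
noncomputable def startStep (r : α → α → Prop) : List α → ℕ
  | a :: b :: _ => if r a b then 1 else 0
  | _ => 0

/-- The indicator of the lists of length one. -/
def isSingle (l : List α) : ℕ := if l.length = 1 then 1 else 0

theorem startStep_map (f : β → α) : ∀ l : List β, startStep r (l.map f) = startStep (r on f) l
  | [] | [_] | _ :: _ :: _ => rfl

theorem isSingle_map (f : α → β) (l : List α) : isSingle (l.map f) = isSingle l := by
  simp [isSingle]

theorem isSingle_reverse (l : List α) : isSingle l.reverse = isSingle l := by
  simp [isSingle]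

theorem startStep_append (hu : u ≠ []) (hv : v ≠ []) (h : ∀ x ∈ u, ∀ y ∈ v, r x y) :
    startStep r (u ++ v) = startStep r u + isSingle u := by
  match u, v with
  | [x], y :: v => simp [startStep, isSingle, h x (by simp) y (by simp)]
  | _ :: _ :: _, _ => simp [startStep, isSingle]

theorem startStep_swap_append [Std.Asymm r] (hu : u ≠ []) (h : ∀ x ∈ u, ∀ y ∈ v, r x y) :
    startStep (swap r) (u ++ v) = startStep (swap r) u := by
  match u, v with
  | [x], [] => rfl
  | [x], y :: v => simp [startStep, swap, asymm (h x (by simp) y (by simp))]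
  | _ :: _ :: _, _ => simp [startStep]

theorem peaks_cons_of_rel {a : α} (h : ∀ b ∈ v, r a b) :
    peaks r (a :: v) = peaks r v + startStep (swap r) v := by
  match v with
  | [] | [_] => rfl
  | b :: c :: v => simp [peaks, startStep, swap, h b (by simp), add_comm]

theorem peaks_append [Std.Asymm r] (hu : u ≠ []) (hv : v ≠ []) (h : ∀ x ∈ u, ∀ y ∈ v, r x y) :
    peaks r (u ++ v) = peaks r u + peaks r v + startStep (swap r) v := by
  obtain ⟨u, x, rfl⟩ := (List.eq_nil_or_concat' u).resolve_left hu
  obtain ⟨y, v, rfl⟩ := List.exists_cons_of_ne_nil hv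
  have hyx : ¬ r y x := asymm (h x (by simp) y (by simp))
  have left : peaks r (u ++ [x, y]) = peaks r (u ++ [x]) := by
    rw [← peaks_reverse, ← peaks_reverse (u ++ [x])]
    simpa using peaks_cons_of_not_rel hyx u.reverse
  rw [List.append_assoc, List.singleton_append, peaks_append_cons_cons, left,
    peaks_cons_of_rel (h x (by simp)), add_assoc]

theorem peaks_swap_append [Std.Asymm r] (hu : u ≠ []) (hv : v ≠ [])
    (h : ∀ x ∈ u, ∀ y ∈ v, r x y) :
    peaks (swap r) (u ++ v) = peaks (swap r) u + peaks (swap r) v + startStep r u.reverse := by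
  have h' := peaks_append (r := swap r) (u := v.reverse) (v := u.reverse) (by simpa) (by simpa)
    (by simpa [swap] using fun y hy x hx => h x hx y hy)
  rwa [← List.reverse_append, peaks_reverse, peaks_reverse, peaks_reverse,
    add_comm (peaks _ v)] at h'

end Statistics

section DirectSum

open Function

variable {j k : ℕ} {u v : List ℕ}

theorem gt_on_add_left (j : ℕ) : ((· > ·) on (j + ·) : ℕ → ℕ → Prop) = (· > ·) := by
  ext; simp [onFun]

theorem startStep_lt_directSum (hu : u ∈ sepWords j) (hv : v ∈ sepWords k) :
    startStep (· < ·) (directSum u v) = startStep (· < ·) u + isSingle u :=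
  startStep_append (ne_nil_of_mem_sepWords hu) (by simpa using ne_nil_of_mem_sepWords hv)
    (lt_of_mem_of_mem_map_add hu)

theorem startStep_gt_directSum (hu : u ∈ sepWords j) :
    startStep (· > ·) (directSum u v) = startStep (· > ·) u :=
  startStep_swap_append (ne_nil_of_mem_sepWords hu) (lt_of_mem_of_mem_map_add hu)

theorem startStep_lt_reverse_directSum (hu : u ∈ sepWords j) (hv : v ∈ sepWords k) :
    startStep (· < ·) (directSum u v).reverse = startStep (· < ·) v.reverse := by
  rw [directSum, List.reverse_append, startStep_swap_append (r := (· > ·)), ← List.map_reverse,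
    startStep_map, lt_on_add_left]
  · simpa using ne_nil_of_mem_sepWords hv
  · simpa using fun y hy x hx => lt_of_mem_of_mem_map_add hu x hx _ (List.mem_map_of_mem hy)

theorem startStep_gt_reverse_directSum (hu : u ∈ sepWords j) (hv : v ∈ sepWords k) :
    startStep (· > ·) (directSum u v).reverse = startStep (· > ·) v.reverse + isSingle v := by
  rw [directSum, List.reverse_append, startStep_append, ← List.map_reverse, startStep_map,
    gt_on_add_left, isSingle_map, isSingle_reverse]
  · simpa using ne_nil_of_mem_sepWords hv
  · simpa using ne_nil_of_mem_sepWords hu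
  · simpa using fun y hy x hx => lt_of_mem_of_mem_map_add hu x hx _ (List.mem_map_of_mem hy)

theorem peaks_lt_directSum (hu : u ∈ sepWords j) (hv : v ∈ sepWords k) :
    peaks (· < ·) (directSum u v) =
      peaks (· < ·) u + peaks (· < ·) v + startStep (· > ·) v := by
  have shift_peaks : peaks (· < ·) (v.map (u.length + ·)) = peaks (· < ·) v := by
    rw [peaks_map, lt_on_add_left]
  have shift_start : startStep (· > ·) (v.map (u.length + ·)) = startStep (· > ·) v := by
    rw [startStep_map, gt_on_add_left]
  rw [directSum, ← shift_peaks, ← shift_start]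
  exact peaks_append (ne_nil_of_mem_sepWords hu)
    (by simpa using ne_nil_of_mem_sepWords hv) (lt_of_mem_of_mem_map_add hu)

theorem peaks_gt_directSum (hu : u ∈ sepWords j) (hv : v ∈ sepWords k) :
    peaks (· > ·) (directSum u v) =
      peaks (· > ·) u + peaks (· > ·) v + startStep (· < ·) u.reverse := by
  have shift : peaks (· > ·) (v.map (u.length + ·)) = peaks (· > ·) v := by
    rw [peaks_map, gt_on_add_left]
  rw [directSum, ← shift]
  exact peaks_swap_append (ne_nil_of_mem_sepWords hu)
    (by simpa using ne_nil_of_mem_sepWords hv) (lt_of_mem_of_mem_map_add hu)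

end DirectSum

/-! ### Generating functions -/

section GeneratingFunctions

open PowerSeries

variable {A : ℕ → Finset (List ℕ)} {F G : List ℕ → ℕ}

/-- The generating function `∑ₙ (∑_{l ∈ A n} F l) Xⁿ` of the statistic `F` over the family of
words `A`. -/
noncomputable def gf (A : ℕ → Finset (List ℕ)) (F : List ℕ → ℕ) : ℝ⟦X⟧ :=
  mk fun n => ∑ l ∈ A n, (F l : ℝ)

theorem coeff_gf (n : ℕ) : coeff n (gf A F) = ∑ l ∈ A n, (F l : ℝ) := coeff_mk _ _

theorem gf_add : gf A (F + G) = gf A F + gf A G := by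
  ext n
  simp [coeff_gf, Finset.sum_add_distrib]

theorem gf_sepWords (F : List ℕ → ℕ) : gf sepWords F = gf sumWords F + gf indecWords F := by
  ext n
  rw [map_add, coeff_gf, coeff_gf, coeff_gf]
  exact (Finset.sum_filter_add_sum_filter_not _ _ _).symm

theorem gf_indecWords (F : List ℕ → ℕ) :
    gf indecWords F = C (F [0] : ℝ) * X + gf skewWords F := by
  ext n
  rw [map_add, coeff_C_mul, coeff_X, coeff_gf, coeff_gf]
  by_cases hn : n = 1
  · simp [hn, indecWords_one, skewWords_one]
  · simp [hn, indecWords_eq_skewWords hn]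

theorem gf_skewWords (F : List ℕ → ℕ) : gf skewWords F = gf sumWords (F ∘ List.reverse) := by
  ext n
  rw [coeff_gf, coeff_gf]
  refine Finset.sum_bij' (fun l _ => l.reverse) (fun l _ => l.reverse) ?_ ?_ ?_ ?_ ?_ <;>
    simp [← reverse_mem_sumWords]

theorem gf_sepWords_comp_reverse (F : List ℕ → ℕ) :
    gf sepWords (F ∘ List.reverse) = gf sepWords F := by
  ext n
  rw [coeff_gf, coeff_gf]
  refine Finset.sum_bij' (fun l _ => l.reverse) (fun l _ => l.reverse) ?_ ?_ ?_ ?_ ?_ <;>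
    simp [reverse_mem_sepWords]

theorem gf_isSingle (hA : ∀ n, A n ⊆ sepWords n) (h : A 1 = {[0]}) : gf A isSingle = X := by
  ext n
  rw [coeff_gf, coeff_X]
  split_ifs with hn
  · rw [hn, h, Finset.sum_singleton]
    simp [isSingle]
  · exact Finset.sum_eq_zero fun l hl => by
      simp [isSingle, length_of_mem_sepWords (hA n hl), hn]

theorem gf_sumWords {ι : Type*} [Fintype ι] {G H : ι → List ℕ → ℕ}
    (h : ∀ ⦃j k u v⦄, u ∈ indecWords j → v ∈ sepWords k →
      F (directSum u v) = ∑ i, G i u * H i v) :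
    gf sumWords F = ∑ i, gf indecWords (G i) * gf sepWords (H i) := by
  ext n
  simp only [map_sum, coeff_mul, coeff_gf, sum_sumWords, Finset.sum_mul_sum]
  rw [Finset.sum_comm (s := Finset.univ)]
  refine Finset.sum_congr rfl fun p _ => ?_
  rw [Finset.sum_comm (s := Finset.univ)]
  refine Finset.sum_congr rfl fun u hu => ?_
  rw [Finset.sum_comm (s := Finset.univ)]
  refine Finset.sum_congr rfl fun v hv => ?_
  exact_mod_cast h hu hv

theorem gf_sepWords_one : gf sepWords 1 + X = 2 * gf indecWords 1 := by
  have hI := gf_indecWords 1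
  rw [gf_skewWords, show (1 : List ℕ → ℕ) ∘ List.reverse = 1 from rfl] at hI
  simp only [Pi.one_apply, Nat.cast_one, map_one, one_mul] at hI
  linear_combination gf_sepWords 1 - hI

theorem gf_sumWords_one : gf sumWords 1 = gf indecWords 1 * gf sepWords 1 := by
  simpa using gf_sumWords (F := 1) (G := fun _ : Unit => 1) (H := fun _ => 1) (by simp)

theorem gf_indecWords_one_mul :
    gf indecWords 1 * gf sepWords 1 = gf sepWords 1 - gf indecWords 1 := by
  rw [← gf_sumWords_one, eq_sub_iff_add_eq, ← gf_sepWords]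

theorem schroeder_equation :
    gf sepWords 1 ^ 2 = gf sepWords 1 - X - X * gf sepWords 1 := by
  linear_combination 2 * gf_indecWords_one_mul + (1 + gf sepWords 1) * gf_sepWords_one

theorem gf_indecWords_isSingle : gf indecWords isSingle = X :=
  gf_isSingle (fun _ => Finset.filter_subset _ _) indecWords_one

theorem gf_sepWords_isSingle : gf sepWords isSingle = X :=
  gf_isSingle (fun _ => subset_rfl) sepWords_one

theorem gf_indecWords_startStep (r : ℕ → ℕ → Prop) :
    gf indecWords (startStep r) = gf sumWords (startStep r ∘ List.reverse) := by
  simp [gf_indecWords, gf_skewWords, startStep]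

theorem gf_indecWords_startStep_lt :
    gf indecWords (startStep (· < ·)) = gf indecWords 1 * gf sepWords (startStep (· < ·)) := by
  rw [gf_indecWords_startStep, ← gf_sepWords_comp_reverse]
  simpa using gf_sumWords (G := fun _ : Unit => 1)
    (H := fun _ => startStep (· < ·) ∘ List.reverse) fun j k u v hu hv => by
      simpa using startStep_lt_reverse_directSum (mem_indecWords.1 hu).1 hv

theorem gf_indecWords_startStep_gt :
    gf indecWords (startStep (· > ·)) =
      gf indecWords 1 * (gf sepWords (startStep (· > ·)) + X) := by
  rw [gf_indecWords_startStep, ← gf_sepWords_comp_reverse, ← gf_sepWords_isSingle, ← gf_add]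
  simpa using gf_sumWords (G := fun _ : Unit => 1)
    (H := fun _ => startStep (· > ·) ∘ List.reverse + isSingle) fun j k u v hu hv => by
      simpa using startStep_gt_reverse_directSum (mem_indecWords.1 hu).1 hv

theorem gf_sumWords_startStep_lt :
    gf sumWords (startStep (· < ·)) =
      (gf indecWords (startStep (· < ·)) + X) * gf sepWords 1 := by
  rw [← gf_indecWords_isSingle, ← gf_add]
  simpa using gf_sumWords (G := fun _ : Unit => startStep (· < ·) + isSingle)
    (H := fun _ => 1) fun j k u v hu hv => by
      simpa using startStep_lt_directSum (mem_indecWords.1 hu).1 hv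

theorem gf_sumWords_startStep_gt :
    gf sumWords (startStep (· > ·)) = gf indecWords (startStep (· > ·)) * gf sepWords 1 := by
  simpa using gf_sumWords (G := fun _ : Unit => startStep (· > ·))
    (H := fun _ => 1) fun j k u v hu _ => by
      simpa using startStep_gt_directSum (mem_indecWords.1 hu).1

theorem eq_of_mul_one_sub_gf_sepWords_eq {Y Z : ℝ⟦X⟧}
    (h : Y * (1 - gf sepWords 1) = Z * (1 - gf sepWords 1)) : Y = Z := by
  refine mul_right_cancel₀ (fun h0 => ?_) h
  have hc := congrArg (coeff 0) h0
  rw [map_sub, coeff_zero_one, coeff_gf] at hc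
  simp [sepWords_zero] at hc

theorem two_mul_gf_startStep_lt :
    2 * gf sepWords (startStep (· < ·)) = gf sepWords 1 - X := by
  have h := gf_sepWords (startStep (· < ·))
  rw [gf_sumWords_startStep_lt, gf_indecWords_startStep_lt] at h
  apply eq_of_mul_one_sub_gf_sepWords_eq
  linear_combination 2 * h + 2 * gf sepWords (startStep (· < ·)) * gf_indecWords_one_mul +
    schroeder_equation

theorem two_mul_gf_startStep_gt :
    2 * gf sepWords (startStep (· > ·)) = gf sepWords 1 - X := by
  have h := gf_sepWords (startStep (· > ·))
  rw [gf_sumWords_startStep_gt, gf_indecWords_startStep_gt] at h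
  apply eq_of_mul_one_sub_gf_sepWords_eq
  linear_combination 2 * h + 2 * (gf sepWords (startStep (· > ·)) + X) * gf_indecWords_one_mul +
    schroeder_equation

theorem gf_indecWords_peaks (r : ℕ → ℕ → Prop) :
    gf indecWords (peaks r) = gf sumWords (peaks r) := by
  have hrev : peaks r ∘ List.reverse = peaks r := funext peaks_reverse
  simp [gf_indecWords, gf_skewWords, hrev, peaks]

theorem gf_sepWords_peaks (r : ℕ → ℕ → Prop) :
    gf sepWords (peaks r) = 2 * gf sumWords (peaks r) := by
  rw [gf_sepWords, gf_indecWords_peaks, two_mul]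

theorem gf_sumWords_peaks_lt :
    gf sumWords (peaks (· < ·)) =
      gf indecWords (peaks (· < ·)) * gf sepWords 1 +
      gf indecWords 1 * (gf sepWords (peaks (· < ·)) + gf sepWords (startStep (· > ·))) := by
  rw [← gf_add]
  simpa using gf_sumWords (G := ![peaks (· < ·), 1])
    (H := ![1, peaks (· < ·) + startStep (· > ·)]) fun j k u v hu hv => by
      simpa [add_assoc] using peaks_lt_directSum (mem_indecWords.1 hu).1 hv

theorem gf_sumWords_peaks_gt :
    gf sumWords (peaks (· > ·)) =
      (gf indecWords (peaks (· > ·)) + gf sumWords (startStep (· < ·))) * gf sepWords 1 +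
      gf indecWords 1 * gf sepWords (peaks (· > ·)) := by
  have hrev : gf sumWords (startStep (· < ·)) =
      gf indecWords (startStep (· < ·) ∘ List.reverse) := by
    simp [gf_indecWords, gf_skewWords, Function.comp_assoc, startStep]
  rw [hrev, ← gf_add]
  simpa using gf_sumWords (G := ![peaks (· > ·) + startStep (· < ·) ∘ List.reverse, 1])
    (H := ![1, peaks (· > ·)]) fun j k u v hu hv => by
      simpa [add_right_comm] using peaks_gt_directSum (mem_indecWords.1 hu).1 hv

theorem peaks_equation (s : Bool) :
    2 * gf sepWords (peaks (signedLT s)) * (1 - X - 2 * gf sepWords 1) =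
      gf sepWords 1 ^ 2 - X ^ 2 := by
  rw [gf_sepWords_peaks]
  cases s
  · change 2 * (2 * gf sumWords (peaks (· > ·))) * _ = _
    have hpeaks := gf_sumWords_peaks_gt
    have hstart := gf_sepWords (startStep (· < ·))
    rw [gf_sepWords_peaks, gf_indecWords_peaks] at hpeaks
    rw [gf_indecWords_startStep_lt] at hstart
    linear_combination 4 * hpeaks - 4 * gf sepWords 1 * hstart -
      4 * gf sepWords (startStep (· < ·)) * gf_indecWords_one_mul +
      2 * gf indecWords 1 * two_mul_gf_startStep_lt -
      (4 * gf sumWords (peaks (· > ·)) + gf sepWords 1 - X) * gf_sepWords_one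
  · change 2 * (2 * gf sumWords (peaks (· < ·))) * _ = _
    have hpeaks := gf_sumWords_peaks_lt
    rw [gf_sepWords_peaks, gf_indecWords_peaks] at hpeaks
    linear_combination 4 * hpeaks + 2 * gf indecWords 1 * two_mul_gf_startStep_gt -
      (4 * gf sumWords (peaks (· < ·)) + gf sepWords 1 - X) * gf_sepWords_one

end GeneratingFunctions

/-! ### Asymptotics -/

section AffineRecurrences

theorem tendsto_zero_of_le_mul_add {e b : ℕ → ℝ} {q : ℝ} (hq0 : 0 ≤ q) (hq : q < 1)
    (hb : Tendsto b atTop (nhds 0)) (h : ∀ᶠ n in atTop, |e (n + 1)| ≤ q * |e n| + b n) :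
    Tendsto e atTop (nhds 0) := by
  rw [Metric.tendsto_atTop]
  intro ε hε
  have hsmall : ∀ᶠ n in atTop, b n < (1 - q) * (ε / 2) :=
    hb.eventually_lt_const (mul_pos (sub_pos.2 hq) (half_pos hε))
  obtain ⟨N, hN⟩ := eventually_atTop.1 (h.and hsmall)
  have geometric (k : ℕ) : |e (N + k)| ≤ q ^ k * |e N| + ε / 2 := by
    induction k with
    | zero => simpa using (half_pos hε).le
    | succ k ih =>
      obtain ⟨hstep, hbound⟩ := hN (N + k) (Nat.le_add_right _ _)
      calc |e (N + (k + 1))| ≤ q * |e (N + k)| + b (N + k) := hstep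
        _ ≤ q * (q ^ k * |e N| + ε / 2) + (1 - q) * (ε / 2) := by gcongr
        _ = q ^ (k + 1) * |e N| + ε / 2 := by ring
  have hpow : Tendsto (fun k : ℕ => q ^ k * |e N|) atTop (nhds 0) := by
    simpa using (tendsto_pow_atTop_nhds_zero_of_lt_one hq0 hq).mul_const |e N|
  obtain ⟨K, hK⟩ := eventually_atTop.1 (hpow.eventually_lt_const (half_pos hε))
  refine ⟨N + K, fun n hn => ?_⟩
  obtain ⟨k, rfl⟩ := Nat.exists_eq_add_of_le (le_of_add_le_left hn)
  rw [Real.dist_eq, sub_zero]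
  linarith [geometric k, hK k (by omega)]

theorem tendsto_of_affine_recurrence {e a b : ℕ → ℝ} {A B : ℝ}
    (h : ∀ n, e (n + 1) = a n * e n + b n) (ha : Tendsto a atTop (nhds A)) (hA : |A| < 1)
    (hb : Tendsto b atTop (nhds B)) : Tendsto e atTop (nhds (B / (1 - A))) := by
  set L := B / (1 - A) with hL
  have hfix : A * L + B - L = 0 := by
    have : 1 - A ≠ 0 := (sub_pos.2 (abs_lt.1 hA).2).ne'
    rw [hL]
    field_simp
    ring
  obtain ⟨q, hAq, hq⟩ := exists_between hA
  have herr : Tendsto (fun n => |a n * L + b n - L|) atTop (nhds 0) := by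
    simpa [hfix] using (((ha.mul_const L).add hb).sub_const L).abs
  have hsub : Tendsto (fun n => e n - L) atTop (nhds 0) := by
    refine tendsto_zero_of_le_mul_add ((abs_nonneg A).trans hAq.le) hq herr ?_
    filter_upwards [ha.abs.eventually_le_const hAq] with n hn
    calc |e (n + 1) - L| = |a n * (e n - L) + (a n * L + b n - L)| := by rw [h]; ring_nf
      _ ≤ |a n| * |e n - L| + |a n * L + b n - L| := (abs_add_le _ _).trans_eq (by rw [abs_mul])
      _ ≤ q * |e n - L| + |a n * L + b n - L| := by gcongr
  simpa using hsub.add_const L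

end AffineRecurrences

section CentralDelannoy

/-- The initial values and three-term recurrence of the central Delannoy numbers
`1, 3, 13, 63, …`. -/
structure IsCentralDelannoy (d : ℕ → ℝ) : Prop where
  zero : d 0 = 1
  one : d 1 = 3
  recurrence (n : ℕ) : (n + 2) * d (n + 2) = (6 * n + 9) * d (n + 1) - (n + 1) * d n

namespace IsCentralDelannoy

variable {d : ℕ → ℝ} {α : ℝ}

theorem pos_and_three_mul_le (hd : IsCentralDelannoy d) (n : ℕ) :
    0 < d n ∧ 3 * d n ≤ d (n + 1) := by
  induction n with
  | zero => simp [hd.zero, hd.one]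
  | succ n ih =>
    obtain ⟨hpos, hle⟩ := ih
    have hpos' : 0 < d (n + 1) := by linarith
    refine ⟨hpos', le_of_mul_le_mul_left (a := (n + 2 : ℝ)) ?_ (by positivity)⟩
    nlinarith [hd.recurrence n, mul_nonneg (n.cast_nonneg (α := ℝ)) hpos'.le,
      mul_nonneg (n.cast_nonneg (α := ℝ)) (sub_nonneg.2 hle)]

theorem three_le_div (hd : IsCentralDelannoy d) (n : ℕ) : 3 ≤ d (n + 1) / d n :=
  (le_div_iff₀ (hd.pos_and_three_mul_le n).1).2 (hd.pos_and_three_mul_le n).2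

theorem div_succ_sub (hd : IsCentralDelannoy d) (hα : 3 ≤ α) (hα' : α ^ 2 = 6 * α - 1) (n : ℕ) :
    d (n + 2) / d (n + 1) - α =
      1 / (α * (d (n + 1) / d n)) * (d (n + 1) / d n - α) +
        (1 / (d (n + 1) / d n) - 3) / (n + 2) := by
  have hd0 := (hd.pos_and_three_mul_le n).1.ne'
  have hd1 := (hd.pos_and_three_mul_le (n + 1)).1.ne'
  have hα0 : α ≠ 0 := by linarith
  field_simp
  linear_combination α * hd.recurrence n - (n + 2) * d (n + 1) * hα'

theorem tendsto_div (hd : IsCentralDelannoy d) (hα : 3 ≤ α) (hα' : α ^ 2 = 6 * α - 1) :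
    Tendsto (fun n => d (n + 1) / d n) atTop (nhds α) := by
  have hlim : Tendsto (fun n : ℕ => (3 : ℝ) / (n + 2)) atTop (nhds 0) := by
    simpa [add_comm] using tendsto_add_mul_div_add_mul_atTop_nhds (3 : ℝ) 2 0 one_ne_zero
  suffices Tendsto (fun n => d (n + 1) / d n - α) atTop (nhds 0) by
    simpa using this.add_const α
  refine tendsto_zero_of_le_mul_add (q := 1 / 9) (by norm_num) (by norm_num) hlim
    (Eventually.of_forall fun n => ?_)
  rw [hd.div_succ_sub hα hα']
  have hρ := hd.three_le_div n
  generalize d (n + 1) / d n = ρ at hρ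
  have hcoeff : |1 / (α * ρ)| ≤ 1 / 9 := by
    rw [abs_of_pos (by positivity)]
    exact one_div_le_one_div_of_le (by norm_num) (by nlinarith)
  have herr : |(1 / ρ - 3) / (n + 2)| ≤ 3 / (n + 2) := by
    have hinv : 1 / ρ ≤ 1 / 3 := one_div_le_one_div_of_le (by norm_num) hρ
    have hpos : 0 < 1 / ρ := by positivity
    rw [abs_div, abs_of_pos (show (0 : ℝ) < n + 2 by positivity)]
    gcongr
    rw [abs_le]
    constructor <;> linarith
  calc _ ≤ |1 / (α * ρ)| * |ρ - α| + |(1 / ρ - 3) / (n + 2)| :=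
        (abs_add_le _ _).trans_eq (by rw [abs_mul])
    _ ≤ 1 / 9 * |ρ - α| + 3 / (n + 2) := by gcongr

theorem tendsto_mul_div_sub (hd : IsCentralDelannoy d) (hα : 3 ≤ α) (hα' : α ^ 2 = 6 * α - 1) :
    Tendsto (fun n : ℕ => (n + 2) * (d (n + 1) / d n - α)) atTop (nhds (-α / 2)) := by
  have hα0 : α ≠ 0 := by linarith
  have hone : Tendsto (fun n : ℕ => ((n : ℝ) + 3) / (n + 2)) atTop (nhds 1) := by
    simpa [add_comm] using tendsto_add_mul_div_add_mul_atTop_nhds (3 : ℝ) 2 1 one_ne_zero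
  have hinv : Tendsto (fun n => 1 / (d (n + 1) / d n)) atTop (nhds (1 / α)) :=
    tendsto_const_nhds.div (hd.tendsto_div hα hα') hα0
  have hcoeff := hone.mul (hinv.const_mul (1 / α))
  have herr := hone.mul (hinv.sub_const 3)
  have hlt : |1 * (1 / α * (1 / α))| < 1 := by
    rw [one_mul, abs_mul_self, div_mul_div_comm, one_mul, div_lt_one (by positivity)]
    nlinarith
  have hlimit : 1 * (1 / α - 3) / (1 - 1 * (1 / α * (1 / α))) = -α / 2 := by
    rw [div_eq_div_iff (sub_pos.2 (abs_lt.1 hlt).2).ne' two_ne_zero]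
    field_simp
    linear_combination hα'
  rw [← hlimit]
  refine tendsto_of_affine_recurrence (fun n => ?_) hcoeff hlt herr
  have : d (n + 1) / d n ≠ 0 := by linarith [hd.three_le_div n]
  rw [hd.div_succ_sub hα hα']
  push_cast
  field_simp
  ring

end IsCentralDelannoy

end CentralDelannoy

section SchroederSeries

open PowerSeries

theorem coeff_add_two_quadratic_mul (a b c : ℝ) (f : ℝ⟦X⟧) (n : ℕ) :
    coeff (n + 2) ((C a + C b * X + C c * X ^ 2) * f) =
      a * coeff (n + 2) f + b * coeff (n + 1) f + c * coeff n f := by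
  simp only [add_mul, mul_assoc, map_add, coeff_C_mul, coeff_succ_X_mul, coeff_X_pow_mul]

theorem coeff_one_quadratic_mul (a b c : ℝ) (f : ℝ⟦X⟧) :
    coeff 1 ((C a + C b * X + C c * X ^ 2) * f) = a * coeff 1 f + b * coeff 0 f := by
  simp only [add_mul, mul_assoc, map_add, coeff_C_mul, coeff_succ_X_mul, pow_two,
    coeff_zero_X_mul, mul_zero, add_zero]

theorem coeff_add_two_linear (a b : ℝ) (n : ℕ) :
    coeff (n + 2) (C a + C b * X : ℝ⟦X⟧) = 0 := by
  simp

theorem coeff_X_mul_derivative (f : ℝ⟦X⟧) (n : ℕ) :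
    coeff n (X * d⁄dX ℝ f) = n * coeff n f := by
  cases n with
  | zero => simp
  | succ n => rw [coeff_succ_X_mul, coeff_derivative, mul_comm, Nat.cast_succ]

theorem X_mul_derivative_inv {R : ℝ⟦X⟧} (hR : R ^ 2 = 1 - 6 * X + X ^ 2)
    (hR0 : constantCoeff R = 1) :
    (1 - 6 * X + X ^ 2) * (X * d⁄dX ℝ R⁻¹) = (3 * X - X ^ 2) * R⁻¹ := by
  have hinv : R * R⁻¹ = 1 := PowerSeries.mul_inv_cancel _ (by simp [hR0])
  have hderiv : R * d⁄dX ℝ R = X - 3 := by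
    have := algebraRat.charZero ℝ⟦X⟧
    refine mul_left_cancel₀ two_ne_zero ?_
    have h := congrArg (d⁄dX ℝ) hR
    have h6 : d⁄dX ℝ (6 : ℝ⟦X⟧) = 0 := by simpa using (d⁄dX ℝ).map_natCast 6
    simp only [map_add, map_sub, Derivation.leibniz, Derivation.leibniz_pow, h6,
      Derivation.map_one_eq_zero, derivative_X, Nat.add_one_sub_one, pow_one, smul_eq_mul,
      nsmul_eq_mul, Nat.cast_ofNat, mul_one, mul_zero, add_zero, zero_sub] at h
    linear_combination h
  rw [derivative_inv', ← hR]
  linear_combination (-X * R * R⁻¹ ^ 2) * hderiv - X * (X - 3) * R⁻¹ * hinv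

theorem isCentralDelannoy_coeff_inv {R : ℝ⟦X⟧} (hR : R ^ 2 = 1 - 6 * X + X ^ 2)
    (hR0 : constantCoeff R = 1) : IsCentralDelannoy fun n => coeff n R⁻¹ := by
  have hzero : coeff 0 R⁻¹ = 1 := by simp [hR0]
  have hode : (C 1 + C (-6) * X + C 1 * X ^ 2) * (X * d⁄dX ℝ R⁻¹) =
      (C 0 + C 3 * X + C (-1) * X ^ 2) * R⁻¹ := by
    rw [map_neg, map_neg, map_zero, map_one, map_ofNat C 6, map_ofNat C 3]
    linear_combination X_mul_derivative_inv hR hR0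
  refine ⟨hzero, ?_, fun n => ?_⟩
  · have h := congrArg (coeff 1) hode
    rw [coeff_one_quadratic_mul, coeff_one_quadratic_mul, coeff_X_mul_derivative,
      coeff_X_mul_derivative, hzero] at h
    simpa using h
  · have h := congrArg (coeff (n + 2)) hode
    rw [coeff_add_two_quadratic_mul, coeff_add_two_quadratic_mul] at h
    simp only [coeff_X_mul_derivative] at h
    push_cast at h
    linarith

theorem sq_of_schroeder {S : ℝ⟦X⟧} (hS : S ^ 2 = S - X - X * S) :
    (1 - X - 2 * S) ^ 2 = 1 - 6 * X + X ^ 2 := by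
  linear_combination 4 * hS

theorem schroeder_eq_mul_inv {S : ℝ⟦X⟧} (hS : S ^ 2 = S - X - X * S)
    (hS0 : constantCoeff S = 0) :
    2 * S = 1 - X - (1 - 6 * X + X ^ 2) * (1 - X - 2 * S)⁻¹ := by
  have hinv := PowerSeries.mul_inv_cancel (1 - X - 2 * S) (by simp [hS0])
  linear_combination (1 - X - 2 * S) * hinv - (1 - X - 2 * S)⁻¹ * sq_of_schroeder hS

theorem peaks_eq_mul_inv {S P : ℝ⟦X⟧} (hS : S ^ 2 = S - X - X * S)
    (hS0 : constantCoeff S = 0) (hP : 2 * P * (1 - X - 2 * S) = S ^ 2 - X ^ 2) :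
    4 * P = X - 1 + (1 - 4 * X - X ^ 2) * (1 - X - 2 * S)⁻¹ := by
  have hinv := PowerSeries.mul_inv_cancel (1 - X - 2 * S) (by simp [hS0])
  linear_combination 2 * (1 - X - 2 * S)⁻¹ * hP + 2 * (1 - X - 2 * S)⁻¹ * hS -
    (1 - X + 4 * P) * hinv

theorem coeff_of_schroeder {S : ℝ⟦X⟧} (hS : S ^ 2 = S - X - X * S)
    (hS0 : constantCoeff S = 0) (n : ℕ) :
    2 * (n + 2) * coeff (n + 2) S =
      3 * coeff (n + 1) (1 - X - 2 * S)⁻¹ - coeff n (1 - X - 2 * S)⁻¹ := by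
  have hrec := (isCentralDelannoy_coeff_inv (sq_of_schroeder hS) (by simp [hS0])).recurrence n
  have h : C 2 * S = C 1 + C (-1) * X + (C (-1) + C 6 * X + C (-1) * X ^ 2) *
      (1 - X - 2 * S)⁻¹ := by
    rw [map_neg, map_one, map_ofNat C 2, map_ofNat C 6]
    linear_combination schroeder_eq_mul_inv hS hS0
  have hc := congrArg (coeff (n + 2)) h
  rw [coeff_C_mul, map_add, coeff_add_two_linear, coeff_add_two_quadratic_mul] at hc
  linear_combination (n + 2) * hc - hrec

theorem coeff_peaks_of_schroeder {S P : ℝ⟦X⟧} (hS : S ^ 2 = S - X - X * S)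
    (hS0 : constantCoeff S = 0) (hP : 2 * P * (1 - X - 2 * S) = S ^ 2 - X ^ 2) (n : ℕ) :
    4 * (n + 2) * coeff (n + 2) P =
      (2 * n + 1) * coeff (n + 1) (1 - X - 2 * S)⁻¹ -
        (2 * n + 3) * coeff n (1 - X - 2 * S)⁻¹ := by
  have hrec := (isCentralDelannoy_coeff_inv (sq_of_schroeder hS) (by simp [hS0])).recurrence n
  have h : C 4 * P = C (-1) + C 1 * X + (C 1 + C (-4) * X + C (-1) * X ^ 2) *
      (1 - X - 2 * S)⁻¹ := by
    rw [map_neg, map_neg, map_one, map_ofNat C 4]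
    linear_combination peaks_eq_mul_inv hS hS0 hP
  have hc := congrArg (coeff (n + 2)) h
  rw [coeff_C_mul, map_add, coeff_add_two_linear, coeff_add_two_quadratic_mul] at hc
  linear_combination (n + 2) * hc + hrec

theorem one_add_two_mul_div_of_schroeder {S P : ℝ⟦X⟧} (hS : S ^ 2 = S - X - X * S)
    (hS0 : constantCoeff S = 0) (hP : 2 * P * (1 - X - 2 * S) = S ^ 2 - X ^ 2) (n : ℕ) :
    1 + 2 * (coeff (n + 2) P / coeff (n + 2) S) =
      2 * (n + 2) * (coeff (n + 1) (1 - X - 2 * S)⁻¹ - coeff n (1 - X - 2 * S)⁻¹) /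
        (3 * coeff (n + 1) (1 - X - 2 * S)⁻¹ - coeff n (1 - X - 2 * S)⁻¹) := by
  have hd := isCentralDelannoy_coeff_inv (sq_of_schroeder hS) (by simp [hS0])
  have hs := coeff_of_schroeder hS hS0 n
  have hp := coeff_peaks_of_schroeder hS hS0 hP n
  obtain ⟨hpos, hle⟩ := hd.pos_and_three_mul_le n
  have hden : 3 * coeff (n + 1) (1 - X - 2 * S)⁻¹ - coeff n (1 - X - 2 * S)⁻¹ ≠ 0 := by
    linarith
  have hs0 : coeff (n + 2) S ≠ 0 := by
    rintro h
    rw [h, mul_zero] at hs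
    exact hden hs.symm
  rw [eq_div_iff hden]
  field_simp
  linear_combination coeff (n + 2) S * (hp + hs) - (coeff (n + 2) S + 2 * coeff (n + 2) P) * hs

theorem four_mul_sub_div {a b α t : ℝ} (ha : a ≠ 0) (hab : 3 * b - a ≠ 0)
    (hα : 3 * α - 1 ≠ 0) :
    4 * (t * (b / a - α)) / ((3 * (b / a) - 1) * (3 * α - 1)) =
      2 * t * (b - a) / (3 * b - a) - 2 * (α - 1) / (3 * α - 1) * t := by
  have hratio : 3 * (b / a) - 1 = (3 * b - a) / a := by field_simp
  rw [hratio]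
  generalize hx : 3 * b - a = x at *
  generalize hy : 3 * α - 1 = y at *
  field_simp
  rw [← hx, ← hy]
  ring

theorem IsCentralDelannoy.tendsto_sub {d : ℕ → ℝ} (hd : IsCentralDelannoy d) :
    Tendsto (fun n : ℕ => 2 * (n + 2) * (d (n + 1) - d n) / (3 * d (n + 1) - d n) -
      (2 - √2) * (n + 2)) atTop (nhds (-(1 / 4) * (3 - 2 * √2))) := by
  have hsq : √2 ^ 2 = 2 := Real.sq_sqrt (by norm_num)
  obtain ⟨α, hα⟩ : ∃ α, α = 3 + 2 * √2 := ⟨_, rfl⟩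
  have hα3 : 3 ≤ α := by linarith [Real.sqrt_nonneg 2]
  have hroot : α ^ 2 = 6 * α - 1 := by rw [hα]; linear_combination 4 * hsq
  have hαpos : 3 * α - 1 ≠ 0 := by linarith
  have hslope : 2 - √2 = 2 * (α - 1) / (3 * α - 1) := by
    rw [eq_div_iff hαpos, hα]
    linear_combination -6 * hsq
  have hvalue : 4 * (-α / 2) / ((3 * α - 1) * (3 * α - 1)) = -(1 / 4) * (3 - 2 * √2) := by
    rw [div_eq_iff (mul_ne_zero hαpos hαpos), hα]
    linear_combination (-21 - 18 * √2) * hsq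
  rw [← hvalue, hslope]
  refine (((hd.tendsto_mul_div_sub hα3 hroot).const_mul 4).div
    ((((hd.tendsto_div hα3 hroot).const_mul 3).sub_const 1).mul_const (3 * α - 1))
    (mul_ne_zero hαpos hαpos)).congr fun n => ?_
  obtain ⟨hpos, hle⟩ := hd.pos_and_three_mul_le n
  have hden : 3 * d (n + 1) - d n ≠ 0 := by linarith
  exact four_mul_sub_div hpos.ne' hden hαpos

theorem tendsto_mean_of_schroeder {S P : ℝ⟦X⟧} (hS : S ^ 2 = S - X - X * S)
    (hS0 : constantCoeff S = 0) (hP : 2 * P * (1 - X - 2 * S) = S ^ 2 - X ^ 2) :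
    Tendsto (fun n : ℕ => 1 + 2 * (coeff n P / coeff n S) - (2 - √2) * n) atTop
      (nhds (-(1 / 4) * (3 - 2 * √2))) := by
  rw [← tendsto_add_atTop_iff_nat 2]
  simpa only [one_add_two_mul_div_of_schroeder hS hS0 hP, Nat.cast_add, Nat.cast_ofNat] using
    (isCentralDelannoy_coeff_inv (sq_of_schroeder hS) (by simp [hS0])).tendsto_sub

end SchroederSeries

/-! ### From permutations to words -/

section Permutations

open Function PowerSeries

variable {n : ℕ}

/-- One-line notation of a permutation, with values in `{0, …, n - 1}`. -/
def word (σ : Equiv.Perm (Fin n)) : List ℕ := (List.finRange n).map fun i => (σ i : ℕ)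

theorem containsPattern_iff (σ : Equiv.Perm (Fin n)) (τ : Fin 4 → Fin 4) :
    ContainsPattern σ τ ↔ ∃ f : Fin 4 → Fin n,
      [f 0, f 1, f 2, f 3].Sublist (List.finRange n) ∧ ∀ a b, τ a < τ b ↔ σ (f a) < σ (f b) := by
  refine exists_congr fun f => and_congr_left' ?_
  simp [sublist_finRange_iff, Fin.strictMono_iff_lt_succ, Fin.forall_fin_succ]

theorem avoids3142_lt_word_iff (σ : Equiv.Perm (Fin n)) :
    Avoids3142 (· < ·) (word σ) ↔ ¬ ContainsPattern σ (![2, 0, 3, 1] : Fin 4 → Fin 4) := by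
  rw [word, avoids3142_map, containsPattern_iff, not_exists]
  constructor
  · rintro h f ⟨hs, hf⟩
    exact h _ _ _ _ hs ⟨(hf 1 3).1 (by decide), (hf 3 0).1 (by decide), (hf 0 2).1 (by decide)⟩
  · rintro h a b c d hs ⟨hbd, hda, hac⟩
    have hmono : StrictMono ![σ b, σ d, σ a, σ c] := by
      simpa [Fin.strictMono_iff_lt_succ, Fin.forall_fin_succ] using ⟨hbd, hda, hac⟩
    have hτ : ∀ i, σ (![a, b, c, d] i) = ![σ b, σ d, σ a, σ c] (![2, 0, 3, 1] i : Fin 4) := by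
      simp [Fin.forall_fin_succ]
    exact h ![a, b, c, d] ⟨hs, fun i j => by rw [hτ, hτ, hmono.lt_iff_lt]⟩

theorem avoids3142_gt_word_iff (σ : Equiv.Perm (Fin n)) :
    Avoids3142 (· > ·) (word σ) ↔ ¬ ContainsPattern σ (![1, 3, 0, 2] : Fin 4 → Fin 4) := by
  rw [word, avoids3142_map, containsPattern_iff, not_exists]
  constructor
  · rintro h f ⟨hs, hf⟩
    exact h _ _ _ _ hs ⟨(hf 3 1).1 (by decide), (hf 0 3).1 (by decide), (hf 2 0).1 (by decide)⟩
  · rintro h a b c d hs ⟨hbd, hda, hac⟩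
    have hmono : StrictMono ![σ c, σ a, σ d, σ b] := by
      simpa [Fin.strictMono_iff_lt_succ, Fin.forall_fin_succ] using ⟨hac, hda, hbd⟩
    have hτ : ∀ i, σ (![a, b, c, d] i) = ![σ c, σ a, σ d, σ b] (![1, 3, 0, 2] i : Fin 4) := by
      simp [Fin.forall_fin_succ]
    exact h ![a, b, c, d] ⟨hs, fun i j => by rw [hτ, hτ, hmono.lt_iff_lt]⟩

theorem separableList_word_iff (σ : Equiv.Perm (Fin n)) :
    SeparableList (· < ·) (word σ) ↔ Separable σ := by
  rw [Separable, ← avoids3142_lt_word_iff, ← avoids3142_gt_word_iff, and_comm]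
  rfl

theorem word_injective : Injective (word (n := n)) := fun _ _ h =>
  Equiv.ext fun i => Fin.ext (List.map_inj_left.1 h i (List.mem_finRange i))

theorem word_perm (σ : Equiv.Perm (Fin n)) : (word σ).Perm (List.range n) := by
  rw [← List.map_coe_finRange_eq_range, word, ← Function.comp_def, ← List.map_map]
  exact (σ.map_finRange_perm).map _

theorem exists_word_eq {l : List ℕ} (h : l.Perm (List.range n)) :
    ∃ σ : Equiv.Perm (Fin n), word σ = l := by
  obtain rfl : l.length = n := by simpa using h.length_eq
  have hlt (i : Fin l.length) : l.get i < l.length := List.mem_range.1 (h.subset (l.get_mem i))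
  have hinj : Injective fun i => (⟨l.get i, hlt i⟩ : Fin l.length) := fun i j hij =>
    List.nodup_iff_injective_get.1 (h.nodup_iff.2 List.nodup_range) (Fin.mk.inj hij)
  refine ⟨Equiv.ofBijective _ (Finite.injective_iff_bijective.1 hinj), ?_⟩
  rw [word, ← List.ofFn_eq_map]
  exact List.ofFn_get l

theorem word_mem_sepWords_iff (hn : n ≠ 0) (σ : Equiv.Perm (Fin n)) :
    word σ ∈ sepWords n ↔ σ ∈ SEP n := by
  have hne : word σ ≠ [] := by simpa [word] using hn
  simp [mem_sepWords, SEP, word_perm, hne, separableList_word_iff]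

theorem sum_SEP (hn : n ≠ 0) (F : List ℕ → ℝ) :
    ∑ σ ∈ SEP n, F (word σ) = ∑ l ∈ sepWords n, F l := by
  refine Finset.sum_bij (fun σ _ => word σ) (fun σ => (word_mem_sepWords_iff hn σ).2)
    (fun _ _ _ _ h => word_injective h) (fun l hl => ?_) fun _ _ => rfl
  obtain ⟨σ, rfl⟩ := exists_word_eq (mem_sepWords.1 hl).1
  exact ⟨σ, (word_mem_sepWords_iff hn σ).1 hl, rfl⟩

theorem SEP_nonempty (n : ℕ) : (SEP n).Nonempty := by
  refine ⟨1, Finset.mem_filter.2 ⟨Finset.mem_univ _, ?_, ?_⟩⟩ <;>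
  · rintro ⟨f, hf, h⟩
    have h01 := (h 0 1).2 (hf (by decide))
    have h12 := (h 1 2).2 (hf (by decide))
    revert h01 h12
    decide

theorem altTypeLen_not_eq_peaks_word (hn : n ≠ 0) (s : Bool) (σ : Equiv.Perm (Fin n)) :
    altTypeLen σ s (!s) = 1 + 2 * peaks (signedLT s) (word σ) := by
  rw [altTypeLen_not_eq σ hn, word, peaks_map, peaks_map]
  cases s <;> rfl

theorem sepExp_altTypeLen (hn : n ≠ 0) (s : Bool) :
    sepExp n (fun σ => (altTypeLen σ s (!s) : ℝ)) =
      1 + 2 * (coeff n (gf sepWords (peaks (signedLT s))) / coeff n (gf sepWords 1)) := by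
  have hcard : ((SEP n).card : ℝ) ≠ 0 := Nat.cast_ne_zero.2 (SEP_nonempty n).card_ne_zero
  rw [coeff_gf, coeff_gf, ← sum_SEP hn fun l => (peaks (signedLT s) l : ℝ), ← sum_SEP hn, sepExp]
  simp only [altTypeLen_not_eq_peaks_word hn, Nat.cast_add, Nat.cast_mul, Nat.cast_one,
    Nat.cast_ofNat, Finset.sum_add_distrib, ← Finset.mul_sum, Pi.one_apply, Finset.sum_const,
    nsmul_eq_mul, mul_one]
  field_simp

end Permutations

/-- Refined asymptotics of the mean of `Aₙ^{+,-}` and `Aₙ^{-,+}`: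
`E[Aₙ^{±,∓}] = (2-√2)n - (1/4)(3-2√2) + o(1)`. -/
theorem mean_altTypeLen_pm_refined :
    Tendsto (fun n : ℕ =>
        sepExp n (fun σ => (altTypeLen σ true false : ℝ)) - (2 - Real.sqrt 2) * n) atTop
      (nhds (-(1 / 4) * (3 - 2 * Real.sqrt 2))) ∧
    Tendsto (fun n : ℕ =>
        sepExp n (fun σ => (altTypeLen σ false true : ℝ)) - (2 - Real.sqrt 2) * n) atTop
      (nhds (-(1 / 4) * (3 - 2 * Real.sqrt 2))) := by
  have hconst : PowerSeries.constantCoeff (gf sepWords 1) = 0 := by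
    rw [← PowerSeries.coeff_zero_eq_constantCoeff_apply, coeff_gf, sepWords_zero, Finset.sum_empty]
  have h (s : Bool) : Tendsto (fun n : ℕ =>
      sepExp n (fun σ => (altTypeLen σ s (!s) : ℝ)) - (2 - √2) * n) atTop
      (nhds (-(1 / 4) * (3 - 2 * √2))) := by
    refine (tendsto_mean_of_schroeder schroeder_equation hconst (peaks_equation s)).congr' ?_
    filter_upwards [eventually_ne_atTop 0] with n hn
    rw [sepExp_altTypeLen hn]
  exact ⟨h true, h false⟩
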